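/- Let −|a| < α < β < |a| with 0 ∉ [α, β]. For each positive integer n, let y₀ < y₁ < ... < y_{s_n} enumerate the integers y with y + n even and nα ≤ y ≤ nβ. Then there exists a constant C > 0 such that |Σ_{j=0}^{k} e^{i n θ(y_j/n)}| ≤ C for all n and all k with 0 ≤ k ≤ s_n. -/

import Mathlib

/-!
Since `t(η)` is the critical point determined by `μ'(t) = η`, the derivative of
`θ(η) = 2μ(t(η)) - 2ηt(η)` is just `-2t(η)`. Writing the points of parity `n` as `y = 2k - n`, the
phase `nθ((2k - n)/n)` has derivative `-4t((2k - n)/n)` in `k`. As `t` is strictly increasing with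
values in `(-π/2, π/2)` and vanishes only at `0`, this derivative decreases and, because
`0 ∉ [α, β]`, stays in a compact interval free of multiples of `2π`. By the Kusmin–Landau
inequality such an exponential sum is bounded: with `δ_k = f(k+1) - f(k)` one has
`e^{if(k)} = (e^{if(k+1)} - e^{if(k)}) / (e^{iδ_k} - 1)`, and the factors `1 / (e^{iδ_k} - 1)` have
bounded variation because the `δ_k` are monotone, so summation by parts applies.
-/

open Filter Topology Asymptotics MeasureTheory

noncomputable section

/-- One step of the (column-decomposition) quantum walk `U` on functions `ℤ → ℂ²`:
`(Uf)(x) = P f(x+1) + Q f(x-1)` with `P = [[a,0],[-conj b,0]]`, `Q = [[0,b],[0,conj a]]`. -/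
def qwStep (a b : ℂ) (f : ℤ → ℂ × ℂ) : ℤ → ℂ × ℂ := fun x =>
  (a * (f (x + 1)).1 + b * (f (x - 1)).2,
   -(starRingEnd ℂ) b * (f (x + 1)).1 + (starRingEnd ℂ) a * (f (x - 1)).2)

/-- `δ₀ ⊗ φ : ℤ → ℂ²`. -/
def qwDelta (φ : ℂ × ℂ) : ℤ → ℂ × ℂ := fun x => if x = 0 then φ else 0

/-- Squared norm of a vector in `ℂ²`. -/
def nsq (u : ℂ × ℂ) : ℝ := ‖u.1‖ ^ 2 + ‖u.2‖ ^ 2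

/-- Transition probability `p_n(φ; y) = ‖(Uⁿ(δ₀ ⊗ φ))(y)‖²`. -/
def qwP (a b : ℂ) (φ : ℂ × ℂ) (n : ℕ) (y : ℤ) : ℝ :=
  nsq (((qwStep a b)^[n] (qwDelta φ)) y)

/-- `λ_A(φ) = |φ₂|² − |φ₁|² + (1/|a|²)(ab conj(φ₁)φ₂ + conj(ab) φ₁ conj(φ₂))` (a real number). -/
def lamA (a b : ℂ) (φ : ℂ × ℂ) : ℝ :=
  ‖φ.2‖ ^ 2 - ‖φ.1‖ ^ 2 +
    (a * b * (starRingEnd ℂ) φ.1 * φ.2 +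
      (starRingEnd ℂ) a * (starRingEnd ℂ) b * φ.1 * (starRingEnd ℂ) φ.2).re / ‖a‖ ^ 2

/-- `μ(t) = arccos(|a| cos t)`. -/
def muF (a : ℂ) (t : ℝ) : ℝ := Real.arccos (‖a‖ * Real.cos t)

/-- `t(η) = arcsin(|b|η/(|a|√(1 − η²)))`. -/
def tF (a b : ℂ) (η : ℝ) : ℝ := Real.arcsin (‖b‖ * η / (‖a‖ * Real.sqrt (1 - η ^ 2)))

/-- `θ(η) = 2μ(t(η)) − 2η t(η)`. -/
def thetaF (a b : ℂ) (η : ℝ) : ℝ := 2 * muF a (tF a b η) - 2 * η * tF a b η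

/-- The set of integers `y` with `y + n` even and `nα ≤ y ≤ nβ`
(for `n ≥ 1`, `nα ≤ y ↔ ⌈nα⌉ ≤ y` and `y ≤ nβ ↔ y ≤ ⌊nβ⌋`). These are exactly the points
`y₀ < y₁ < ⋯ < y_{s_n}` of the paper; a partial sum `∑_{j=0}^{k}` over the enumeration is the
same as a sum over the elements `≤ m` for a cutoff `m = y_k`. -/
def Tset (α β : ℝ) (n : ℕ) : Finset ℤ :=
  (Finset.Icc ⌈(n : ℝ) * α⌉ ⌊(n : ℝ) * β⌋).filter fun y => Even ((n : ℤ) + y)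

lemma norm_sum_smul_sub_le {R E : Type*} [SeminormedRing R] [SeminormedAddCommGroup E] [Module R E]
    [IsBoundedSMul R E] {z : ℕ → E} {M : ℝ} (hz : ∀ k, ‖z k - z 0‖ ≤ M) (g : ℕ → R) (n : ℕ) :
    ‖∑ k ∈ Finset.range (n + 1), g k • (z (k + 1) - z k)‖
      ≤ (‖g n‖ + ∑ k ∈ Finset.range n, ‖g (k + 1) - g k‖) * M := by
  have hsmul : ∀ (r : R) k, ‖r • (z k - z 0)‖ ≤ ‖r‖ * M := fun r k =>
    (norm_smul_le _ _).trans (mul_le_mul_of_nonneg_left (hz k) (norm_nonneg _))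
  simp only [Finset.sum_range_by_parts g, Finset.sum_range_sub, Nat.add_sub_cancel]
  rw [add_mul, Finset.sum_mul]
  exact (norm_sub_le _ _).trans
    (add_le_add (hsmul _ _) (norm_sum_le_of_le _ fun k _ => hsmul _ _))

lemma norm_exp_I_mul_sub_exp_I_mul_le (x y : ℝ) :
    ‖Complex.exp (Complex.I * x) - Complex.exp (Complex.I * y)‖ ≤ |x - y| := by
  have hfactor : Complex.exp (Complex.I * x) - Complex.exp (Complex.I * y)
      = Complex.exp (Complex.I * y) * (Complex.exp (Complex.I * ((x - y : ℝ) : ℂ)) - 1) := by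
    rw [mul_sub, ← Complex.exp_add]
    push_cast
    ring_nf
  rw [hfactor, norm_mul, Complex.norm_exp_I_mul_ofReal, one_mul]
  exact Real.norm_exp_I_mul_ofReal_sub_one_le

lemma norm_inv_exp_sub_one_sub_inv_exp_sub_one_le {c x y : ℝ} (hc : 0 < c)
    (hx : c ≤ ‖Complex.exp (Complex.I * x) - 1‖) (hy : c ≤ ‖Complex.exp (Complex.I * y) - 1‖) :
    ‖(Complex.exp (Complex.I * x) - 1)⁻¹ - (Complex.exp (Complex.I * y) - 1)⁻¹‖
      ≤ |x - y| / c ^ 2 := by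
  rw [← dist_eq_norm, dist_inv_inv₀ (norm_pos_iff.1 (hc.trans_le hx))
    (norm_pos_iff.1 (hc.trans_le hy)), dist_eq_norm, sub_sub_sub_cancel_right, sq]
  gcongr
  exact norm_exp_I_mul_sub_exp_I_mul_le x y

lemma exists_pos_le_norm_exp_I_mul_sub_one {s : Set ℝ} (hs : IsCompact s)
    (h : ∀ j : ℤ, j * (2 * Real.pi) ∉ s) :
    ∃ c : ℝ, 0 < c ∧ ∀ x ∈ s, c ≤ ‖Complex.exp (Complex.I * x) - 1‖ := by
  refine hs.exists_forall_le' (by fun_prop) fun x hx => norm_pos_iff.2 fun hzero => ?_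
  obtain ⟨j, hj⟩ := Complex.exp_eq_one_iff.1 (sub_eq_zero.1 hzero)
  have hxj : x = j * (2 * Real.pi) := by simpa using congrArg Complex.im hj
  exact h j (hxj ▸ hx)

lemma exp_I_mul_eq_inv_mul_sub {x y : ℝ}
    (h : Complex.exp (Complex.I * (y - x : ℝ)) - 1 ≠ 0) :
    Complex.exp (Complex.I * x) = (Complex.exp (Complex.I * (y - x : ℝ)) - 1)⁻¹ *
      (Complex.exp (Complex.I * y) - Complex.exp (Complex.I * x)) := by
  have hy : Complex.exp (Complex.I * y)
      = Complex.exp (Complex.I * x) * Complex.exp (Complex.I * (y - x : ℝ)) := by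
    rw [← Complex.exp_add]
    push_cast
    ring_nf
  rw [hy, eq_inv_mul_iff_mul_eq₀ h]
  ring

lemma norm_sum_exp_le_of_antitone_increments {f : ℕ → ℝ} {c p q : ℝ} {N : ℕ} (hc : 0 < c)
    (hpq : ∀ x ∈ Set.Icc p q, c ≤ ‖Complex.exp (Complex.I * x) - 1‖)
    (hmem : ∀ k ≤ N, f (k + 1) - f k ∈ Set.Icc p q)
    (hanti : ∀ k < N, f (k + 2) - f (k + 1) ≤ f (k + 1) - f k) :
    ‖∑ k ∈ Finset.range (N + 1), Complex.exp (Complex.I * f k)‖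
      ≤ (1 / c + (q - p) / c ^ 2) * 2 := by
  set δ : ℕ → ℝ := fun k => f (k + 1) - f k
  set z : ℕ → ℂ := fun k => Complex.exp (Complex.I * f k)
  set g : ℕ → ℂ := fun k => (Complex.exp (Complex.I * δ k) - 1)⁻¹
  have hδ : ∀ k ≤ N, c ≤ ‖Complex.exp (Complex.I * δ k) - 1‖ := fun k hk => hpq _ (hmem k hk)
  have hz : ∀ k ≤ N, z k = g k • (z (k + 1) - z k) := fun k hk =>
    exp_I_mul_eq_inv_mul_sub (norm_pos_iff.1 (hc.trans_le (hδ k hk)))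
  have hzM : ∀ k, ‖z k - z 0‖ ≤ 2 := fun k => (norm_sub_le _ _).trans <| by
    simp only [z, Complex.norm_exp_I_mul_ofReal]
    norm_num
  have hlast : ‖g N‖ ≤ 1 / c := by
    rw [norm_inv, one_div]
    exact inv_anti₀ hc (hδ N le_rfl)
  have hvar : ∑ k ∈ Finset.range N, ‖g (k + 1) - g k‖ ≤ (q - p) / c ^ 2 :=
    calc ∑ k ∈ Finset.range N, ‖g (k + 1) - g k‖
        ≤ ∑ k ∈ Finset.range N, (δ k - δ (k + 1)) / c ^ 2 := by
          refine Finset.sum_le_sum fun k hk => ?_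
          have hk : k < N := Finset.mem_range.1 hk
          rw [← abs_of_nonneg (sub_nonneg.2 (hanti k hk)), abs_sub_comm]
          exact norm_inv_exp_sub_one_sub_inv_exp_sub_one_le hc (hδ (k + 1) hk) (hδ k hk.le)
      _ = (δ 0 - δ N) / c ^ 2 := by rw [← Finset.sum_div, Finset.sum_range_sub']
      _ ≤ (q - p) / c ^ 2 := by
          gcongr
          exacts [(hmem 0 N.zero_le).2, (hmem N le_rfl).1]
  rw [Finset.sum_congr rfl fun k hk => hz k (Finset.mem_range_succ_iff.1 hk)]
  exact (norm_sum_smul_sub_le hzM g N).trans (by gcongr)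

lemma sub_mem_Icc_of_antitoneOn_deriv {f f' : ℝ → ℝ} {s : Set ℝ} [s.OrdConnected]
    (hf : ∀ x ∈ s, HasDerivAt f (f' x) x) (hf' : AntitoneOn f' s) {x : ℝ} (hx : x ∈ s)
    (hx1 : x + 1 ∈ s) : f (x + 1) - f x ∈ Set.Icc (f' (x + 1)) (f' x) := by
  have hsub : Set.Icc x (x + 1) ⊆ s := Set.Icc_subset s hx hx1
  obtain ⟨ξ, hξ, hslope⟩ := exists_hasDerivAt_eq_slope f f' (lt_add_one x)
    (fun y hy => (hf y (hsub hy)).continuousAt.continuousWithinAt)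
    (fun y hy => hf y (hsub (Set.Ioo_subset_Icc_self hy)))
  have hξs : ξ ∈ s := hsub (Set.Ioo_subset_Icc_self hξ)
  rw [add_sub_cancel_left, div_one] at hslope
  exact hslope ▸ ⟨hf' hξs hx1 hξ.2.le, hf' hx hξs hξ.1.le⟩

lemma sum_Icc_int_eq_sum_range {M : Type*} [AddCommMonoid M] (F : ℤ → M) (A B : ℤ) :
    ∑ k ∈ Finset.Icc A B, F k = ∑ k ∈ Finset.range (B + 1 - A).toNat, F (A + k) := by
  rw [Int.Icc_eq_finset_map, Finset.sum_map]
  rfl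

/-- The Kusmin–Landau inequality. -/
theorem exists_norm_sum_exp_le_of_antitoneOn_deriv {p q : ℝ}
    (hpq : ∀ j : ℤ, j * (2 * Real.pi) ∉ Set.Icc p q) :
    ∃ C : ℝ, 0 < C ∧ ∀ (f f' : ℝ → ℝ) (A B : ℝ),
      (∀ x ∈ Set.Icc A B, HasDerivAt f (f' x) x) → AntitoneOn f' (Set.Icc A B) →
      Set.MapsTo f' (Set.Icc A B) (Set.Icc p q) →
      ‖∑ k ∈ Finset.Icc ⌈A⌉ ⌊B⌋, Complex.exp (Complex.I * f k)‖ ≤ C := by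
  obtain ⟨c, hc, hcpq⟩ := exists_pos_le_norm_exp_I_mul_sub_one isCompact_Icc hpq
  refine ⟨(1 / c + |q - p| / c ^ 2) * 2 + 1, by positivity, fun f f' A B hf hf' hmaps => ?_⟩
  rw [sum_Icc_int_eq_sum_range]
  set x : ℕ → ℝ := fun k => ((⌈A⌉ + k : ℤ) : ℝ)
  change ‖∑ k ∈ Finset.range _, Complex.exp (Complex.I * f (x k))‖ ≤ _
  have hx : ∀ k < (⌊B⌋ + 1 - ⌈A⌉).toNat, x k ∈ Set.Icc A B := fun k hk =>
    ⟨Int.ceil_le.1 (by omega), Int.le_floor.1 (by omega)⟩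
  have hsucc : ∀ k, x (k + 1) = x k + 1 := fun k => by
    simp only [x]
    push_cast
    ring
  generalize (⌊B⌋ + 1 - ⌈A⌉).toNat = N at hx ⊢
  have hincr : ∀ k, k + 1 < N →
      f (x (k + 1)) - f (x k) ∈ Set.Icc (f' (x (k + 1))) (f' (x k)) := fun k hk =>
    hsucc k ▸ sub_mem_Icc_of_antitoneOn_deriv hf hf' (hx k (by omega)) (hsucc k ▸ hx _ hk)
  rcases N with _ | _ | N
  · simp only [Finset.range_zero, Finset.sum_empty, norm_zero]
    positivity
  · rw [zero_add, Finset.sum_range_one, Complex.norm_exp_I_mul_ofReal, le_add_iff_nonneg_left]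
    positivity
  · rw [Finset.sum_range_succ]
    refine (norm_add_le _ _).trans (add_le_add ?_ (Complex.norm_exp_I_mul_ofReal _).le)
    refine (norm_sum_exp_le_of_antitone_increments (f := f ∘ x) hc hcpq (fun k hk => ?_)
      fun k hk => ?_).trans (by gcongr; exact le_abs_self _)
    · exact ⟨(hmaps (hx (k + 1) (by omega))).1.trans (hincr k (by omega)).1,
        (hincr k (by omega)).2.trans (hmaps (hx k (by omega))).2⟩
    · exact (hincr (k + 1) (by omega)).2.trans (hincr k (by omega)).1

lemma strictMonoOn_div_sqrt_one_sub_sq :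
    StrictMonoOn (fun x : ℝ => x / √(1 - x ^ 2)) (Set.Ioo (-1) 1) := by
  intro x hx y hy hxy
  simp only [← Real.tan_arcsin]
  exact Real.tan_lt_tan_of_lt_of_lt_pi_div_two (Real.neg_pi_div_two_lt_arcsin.2 hx.1)
    (Real.arcsin_lt_pi_div_two.2 hy.2)
    (Real.strictMonoOn_arcsin (Set.Ioo_subset_Icc_self hx) (Set.Ioo_subset_Icc_self hy) hxy)

lemma hasDerivAt_muF {a : ℂ} (ha : ‖a‖ < 1) (t : ℝ) :
    HasDerivAt (muF a) (‖a‖ * Real.sin t / √(1 - (‖a‖ * Real.cos t) ^ 2)) t := by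
  have hlt : |‖a‖ * Real.cos t| < 1 := by
    rw [abs_mul, abs_norm]
    exact (mul_le_of_le_one_right (norm_nonneg a) (Real.abs_cos_le_one t)).trans_lt ha
  have harccos := Real.hasDerivAt_arccos (abs_lt.1 hlt).1.ne' (abs_lt.1 hlt).2.ne
  refine (harccos.comp t ((Real.hasDerivAt_cos t).const_mul ‖a‖)).congr_deriv ?_
  ring

lemma tF_zero (a b : ℂ) : tF a b 0 = 0 := by simp [tF]

section Phase

variable {a b : ℂ} {η : ℝ}

lemma one_sub_sq_pos_of_mem_Ioo_norm (hab : ‖a‖ ^ 2 + ‖b‖ ^ 2 = 1) (hη : η ∈ Set.Ioo (-‖a‖) ‖a‖) :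
    0 < 1 - η ^ 2 := by
  have hsq : η ^ 2 < ‖a‖ ^ 2 := sq_lt_sq' hη.1 hη.2
  linarith [sq_nonneg ‖b‖]

lemma tF_arcsin_arg_mem_Ioo (hab : ‖a‖ ^ 2 + ‖b‖ ^ 2 = 1) (hη : η ∈ Set.Ioo (-‖a‖) ‖a‖) :
    ‖b‖ * η / (‖a‖ * √(1 - η ^ 2)) ∈ Set.Ioo (-1) 1 := by
  have ha : 0 < ‖a‖ := by linarith [hη.1, hη.2]
  have hr : 0 < 1 - η ^ 2 := one_sub_sq_pos_of_mem_Ioo_norm hab hη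
  have hsq : η ^ 2 < ‖a‖ ^ 2 := sq_lt_sq' hη.1 hη.2
  rw [Set.mem_Ioo, ← abs_lt, ← sq_lt_one_iff_abs_lt_one, div_pow, mul_pow, mul_pow,
    Real.sq_sqrt hr.le, div_lt_one (by positivity)]
  linear_combination hsq + η ^ 2 * hab

lemma tF_mem_Ioo (hab : ‖a‖ ^ 2 + ‖b‖ ^ 2 = 1) (hη : η ∈ Set.Ioo (-‖a‖) ‖a‖) :
    tF a b η ∈ Set.Ioo (-(Real.pi / 2)) (Real.pi / 2) :=
  have hmem := tF_arcsin_arg_mem_Ioo hab hη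
  ⟨Real.neg_pi_div_two_lt_arcsin.2 hmem.1, Real.arcsin_lt_pi_div_two.2 hmem.2⟩

lemma sin_tF (hab : ‖a‖ ^ 2 + ‖b‖ ^ 2 = 1) (hη : η ∈ Set.Ioo (-‖a‖) ‖a‖) :
    Real.sin (tF a b η) = ‖b‖ * η / (‖a‖ * √(1 - η ^ 2)) :=
  have hmem := tF_arcsin_arg_mem_Ioo hab hη
  Real.sin_arcsin hmem.1.le hmem.2.le

lemma sqrt_one_sub_sq_norm_mul_cos_tF (hab : ‖a‖ ^ 2 + ‖b‖ ^ 2 = 1) (hη : η ∈ Set.Ioo (-‖a‖) ‖a‖) :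
    √(1 - (‖a‖ * Real.cos (tF a b η)) ^ 2) = ‖b‖ / √(1 - η ^ 2) := by
  have ha : 0 < ‖a‖ := by linarith [hη.1, hη.2]
  have hr : 0 < 1 - η ^ 2 := one_sub_sq_pos_of_mem_Ioo_norm hab hη
  have hsq : 1 - (‖a‖ * Real.cos (tF a b η)) ^ 2 = (‖b‖ / √(1 - η ^ 2)) ^ 2 := by
    rw [mul_pow, Real.cos_sq', sin_tF hab hη, div_pow, div_pow, mul_pow, mul_pow,
      Real.sq_sqrt hr.le]
    field_simp
    linear_combination (η ^ 2 - 1) * hab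
  rw [hsq, Real.sqrt_sq (by positivity)]

lemma differentiableAt_tF (hab : ‖a‖ ^ 2 + ‖b‖ ^ 2 = 1) (hη : η ∈ Set.Ioo (-‖a‖) ‖a‖) :
    DifferentiableAt ℝ (tF a b) η := by
  have ha : 0 < ‖a‖ := by linarith [hη.1, hη.2]
  have hr : 0 < 1 - η ^ 2 := one_sub_sq_pos_of_mem_Ioo_norm hab hη
  have hmem := tF_arcsin_arg_mem_Ioo hab hη
  have hsqrt : DifferentiableAt ℝ (fun η : ℝ => √(1 - η ^ 2)) η :=
    DifferentiableAt.sqrt (by fun_prop) hr.ne'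
  have hformula : DifferentiableAt ℝ (fun η : ℝ => ‖b‖ * η / (‖a‖ * √(1 - η ^ 2))) η :=
    DifferentiableAt.div (by fun_prop) (hsqrt.const_mul _) (by positivity)
  exact (Real.differentiableAt_arcsin.2 ⟨hmem.1.ne', hmem.2.ne⟩).comp η hformula

lemma strictMonoOn_tF (hab : ‖a‖ ^ 2 + ‖b‖ ^ 2 = 1) (hb : b ≠ 0) :
    StrictMonoOn (tF a b) (Set.Ioo (-‖a‖) ‖a‖) := by
  intro x hx y hy hxy
  have ha : 0 < ‖a‖ := by linarith [hx.1, hx.2]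
  have hratio : 0 < ‖b‖ / ‖a‖ := div_pos (norm_pos_iff.2 hb) ha
  have hsub : Set.Ioo (-‖a‖) ‖a‖ ⊆ Set.Ioo (-1) 1 := fun η hη =>
    abs_lt.1 ((sq_lt_one_iff_abs_lt_one η).1 (sub_pos.1 (one_sub_sq_pos_of_mem_Ioo_norm hab hη)))
  have hformula : ‖b‖ * x / (‖a‖ * √(1 - x ^ 2)) < ‖b‖ * y / (‖a‖ * √(1 - y ^ 2)) := by
    rw [← div_mul_div_comm, ← div_mul_div_comm]
    exact mul_lt_mul_of_pos_left (strictMonoOn_div_sqrt_one_sub_sq (hsub hx) (hsub hy) hxy)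
      hratio
  exact Real.strictMonoOn_arcsin (Set.Ioo_subset_Icc_self (tF_arcsin_arg_mem_Ioo hab hx))
    (Set.Ioo_subset_Icc_self (tF_arcsin_arg_mem_Ioo hab hy)) hformula

lemma hasDerivAt_muF_tF (hab : ‖a‖ ^ 2 + ‖b‖ ^ 2 = 1) (hb : b ≠ 0)
    (hη : η ∈ Set.Ioo (-‖a‖) ‖a‖) : HasDerivAt (muF a) η (tF a b η) := by
  have ha : 0 < ‖a‖ := by linarith [hη.1, hη.2]
  have hb' : 0 < ‖b‖ := norm_pos_iff.2 hb
  have ha1 : ‖a‖ < 1 := by nlinarith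
  have hr : 0 < √(1 - η ^ 2) := Real.sqrt_pos.2 (one_sub_sq_pos_of_mem_Ioo_norm hab hη)
  refine (hasDerivAt_muF ha1 _).congr_deriv ?_
  rw [sqrt_one_sub_sq_norm_mul_cos_tF hab hη, sin_tF hab hη]
  field_simp

/-- The contribution of `t'(η)` cancels, since `μ'(t(η)) = η`. -/
lemma hasDerivAt_thetaF (hab : ‖a‖ ^ 2 + ‖b‖ ^ 2 = 1) (hb : b ≠ 0)
    (hη : η ∈ Set.Ioo (-‖a‖) ‖a‖) : HasDerivAt (thetaF a b) (-2 * tF a b η) η := by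
  have ht := (differentiableAt_tF hab hη).hasDerivAt
  have hmu := (hasDerivAt_muF_tF hab hb hη).comp η ht
  refine ((hmu.const_mul 2).sub (((hasDerivAt_id η).const_mul 2).mul ht)).congr_deriv ?_
  simp only [id_eq]
  ring

lemma hasDerivAt_mul_thetaF_div (hab : ‖a‖ ^ 2 + ‖b‖ ^ 2 = 1) (hb : b ≠ 0)
    {n x : ℝ} (hn : n ≠ 0) (hx : (2 * x - n) / n ∈ Set.Ioo (-‖a‖) ‖a‖) :
    HasDerivAt (fun x => n * thetaF a b ((2 * x - n) / n)) (-4 * tF a b ((2 * x - n) / n)) x := by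
  have hinner : HasDerivAt (fun x : ℝ => (2 * x - n) / n) (2 * 1 / n) x :=
    (((hasDerivAt_id x).const_mul 2).sub_const n).div_const n
  refine (((hasDerivAt_thetaF hab hb hx).comp x hinner).const_mul n).congr_deriv ?_
  field_simp
  ring

lemma int_mul_two_pi_notMem_Icc_tF (hab : ‖a‖ ^ 2 + ‖b‖ ^ 2 = 1) (hb : b ≠ 0)
    {α β : ℝ} (hα : α ∈ Set.Ioo (-‖a‖) ‖a‖) (hβ : β ∈ Set.Ioo (-‖a‖) ‖a‖)
    (h0 : 0 ∉ Set.Icc α β) (j : ℤ) :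
    j * (2 * Real.pi) ∉ Set.Icc (-4 * tF a b β) (-4 * tF a b α) := by
  intro hj
  have hmono := strictMonoOn_tF hab hb
  have h0mem : (0 : ℝ) ∈ Set.Ioo (-‖a‖) ‖a‖ := ⟨by linarith [hα.1, hα.2], by linarith [hα.1, hα.2]⟩
  have hj0 : j = 0 := by
    have hlower : (-1 : ℝ) < j := by nlinarith [Real.pi_pos, hj.1, (tF_mem_Ioo hab hβ).2]
    have hupper : (j : ℝ) < 1 := by nlinarith [Real.pi_pos, hj.2, (tF_mem_Ioo hab hα).1]
    norm_cast at hlower hupper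
    omega
  rw [hj0, Int.cast_zero, zero_mul] at hj
  refine h0 ⟨(hmono.le_iff_le hα h0mem).1 ?_, (hmono.le_iff_le h0mem hβ).1 ?_⟩ <;>
    rw [tF_zero] <;> linarith [hj.1, hj.2]

lemma exists_norm_sum_exp_mul_thetaF_le (hab : ‖a‖ ^ 2 + ‖b‖ ^ 2 = 1) (hb : b ≠ 0)
    {α β : ℝ} (hα : α ∈ Set.Ioo (-‖a‖) ‖a‖) (hβ : β ∈ Set.Ioo (-‖a‖) ‖a‖)
    (h0 : 0 ∉ Set.Icc α β) :
    ∃ C : ℝ, 0 < C ∧ ∀ n A B : ℝ, 0 < n →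
      Set.MapsTo (fun x => (2 * x - n) / n) (Set.Icc A B) (Set.Icc α β) →
      ‖∑ k ∈ Finset.Icc ⌈A⌉ ⌊B⌋,
        Complex.exp (Complex.I * (n * thetaF a b ((2 * k - n) / n) : ℝ))‖ ≤ C := by
  obtain ⟨C, hC, hbound⟩ := exists_norm_sum_exp_le_of_antitoneOn_deriv
    (int_mul_two_pi_notMem_Icc_tF hab hb hα hβ h0)
  refine ⟨C, hC, fun n A B hn hmaps => ?_⟩
  have hsub : Set.Icc α β ⊆ Set.Ioo (-‖a‖) ‖a‖ := Set.Icc_subset_Ioo hα.1 hβ.2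
  have hmono : MonotoneOn (tF a b) (Set.Ioo (-‖a‖) ‖a‖) := (strictMonoOn_tF hab hb).monotoneOn
  refine hbound (fun x => n * thetaF a b ((2 * x - n) / n)) (fun x => -4 * tF a b ((2 * x - n) / n))
    A B (fun x hx => hasDerivAt_mul_thetaF_div hab hb hn.ne' (hsub (hmaps hx)))
    (fun x hx y hy hxy => ?_) (fun x hx => ⟨?_, ?_⟩)
  · have hle : (2 * x - n) / n ≤ (2 * y - n) / n := by gcongr
    linarith [hmono (hsub (hmaps hx)) (hsub (hmaps hy)) hle]
  · linarith [hmono (hsub (hmaps hx)) hβ (hmaps hx).2]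
  · linarith [hmono hα (hsub (hmaps hx)) (hmaps hx).1]

end Phase

lemma mapsTo_two_mul_sub_div {n : ℝ} (hn : 0 < n) (α β : ℝ) :
    Set.MapsTo (fun x : ℝ => (2 * x - n) / n) (Set.Icc ((n + n * α) / 2) ((n + n * β) / 2))
      (Set.Icc α β) := fun _ hx =>
  ⟨(le_div_iff₀' hn).2 (by linarith [hx.1]), (div_le_iff₀' hn).2 (by linarith [hx.2])⟩

lemma filter_le_Tset_eq_image (α β : ℝ) (n : ℕ) (m : ℤ) :
    (Tset α β n).filter (· ≤ m) =
      (Finset.Icc ⌈(n + n * α) / 2⌉ ⌊(n + min (n * β) m) / 2⌋).image fun k => 2 * k - (n : ℤ) := by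
  have hmem : ∀ k : ℤ, 2 * k - (n : ℤ) ∈ (Tset α β n).filter (· ≤ m) ↔
      k ∈ Finset.Icc ⌈(n + n * α) / 2⌉ ⌊(n + min (n * β) m) / 2⌋ := by
    intro k
    have heven : Even ((n : ℤ) + (2 * k - n)) := by simp
    have hm : 2 * k - (n : ℤ) ≤ m ↔ 2 * (k : ℝ) - n ≤ m := by exact_mod_cast Iff.rfl
    simp only [Tset, Finset.mem_filter, Finset.mem_Icc, heven, and_true, Int.ceil_le, Int.le_floor,
      div_le_iff₀ (zero_lt_two' ℝ), le_div_iff₀ (zero_lt_two' ℝ), ← sub_le_iff_le_add', le_min_iff,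
      hm, and_assoc, mul_comm (k : ℝ)]
    push_cast
    rw [le_sub_iff_add_le']
  ext y
  rw [Finset.mem_image]
  constructor
  · intro hy
    obtain ⟨k, hk⟩ := (Finset.mem_filter.1 (Finset.mem_filter.1 hy).1).2
    obtain rfl : y = 2 * k - n := by omega
    exact ⟨k, (hmem k).1 hy, rfl⟩
  · rintro ⟨k, hk, rfl⟩
    exact (hmem k).2 hk

/-- Lemma `RmLb`(1): if `0 ∉ [α,β]`, the partial exponential sums
`∑_{j=0}^{k} e^{inθ(y_j/n)}` are bounded uniformly in `n` and `k ≤ s_n`. -/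
theorem stmt10 (a b : ℂ) (hab1 : ‖a‖ ^ 2 + ‖b‖ ^ 2 = 1) (hab : a * b ≠ 0)
    (α β : ℝ) (hα : -‖a‖ < α) (hαβ : α < β) (hβ : β < ‖a‖)
    (h0 : 0 ∉ Set.Icc α β) :
    ∃ C : ℝ, 0 < C ∧
      ∀ n : ℕ, 0 < n → ∀ m : ℤ,
        ‖∑ y ∈ (Tset α β n).filter (· ≤ m),
            Complex.exp (Complex.I * (n : ℂ) * ((thetaF a b ((y : ℝ) / (n : ℝ)) : ℝ) : ℂ))‖ ≤ C := by
  have hb : b ≠ 0 := right_ne_zero_of_mul hab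
  obtain ⟨C, hC, hbound⟩ := exists_norm_sum_exp_mul_thetaF_le hab1 hb
    ⟨hα, hαβ.trans hβ⟩ ⟨hα.trans hαβ, hβ⟩ h0
  refine ⟨C, hC, fun n hn m => ?_⟩
  have hn' : (0 : ℝ) < n := Nat.cast_pos.2 hn
  have hcutoff : ((n : ℝ) + min (n * β) m) / 2 ≤ (n + n * β) / 2 := by
    gcongr
    exact min_le_left _ _
  have hmaps := (mapsTo_two_mul_sub_div hn' α β).mono_left (Set.Icc_subset_Icc_right hcutoff)
  have hinj : Function.Injective fun k : ℤ => 2 * k - (n : ℤ) := fun k l h => by grind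
  rw [filter_le_Tset_eq_image, Finset.sum_image hinj.injOn]
  convert hbound n _ _ hn' hmaps using 4 with k
  push_cast
  rw [mul_assoc]
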